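/- Let u be S-subharmonic on X and let f : X → ℝ be continuous with u(x) < f(x) for every x ∈ X. Then there exists a function v ∈ S such that u(x) < v(x) ≤ f(x) for every x ∈ X. -/

import Mathlib

/-!
The heart of the proof is Edwards' duality. For a point `z` and a continuous `g`, let
`E g = sup {v z | v ∈ S, v ≤ g}` (`edwardsSup`). Since `S` is a convex cone containing the
constants, `E` is finite and superlinear, so `g ↦ -E (-g)` is sublinear. By Hahn-Banach, for a given
`f` there is a linear functional `L` with `E ≤ L` and `L f = E f`. It is positive and
normalised, hence by Riesz-Markov-Kakutani it is integration against a probability measure `μ`, and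
`v z ≤ E v ≤ L v` for `v ∈ S` says that `μ` is a Jensen measure at `z`
(`exists_jensen_integral_eq`).

By compactness and semicontinuity `u ≤ f - ε` for some `ε > 0`
(`exists_pos_forall_le_sub`), so `u z ≤ ∫ u dμ ≤ ∫ f dμ - ε = E f - ε`, and some `v ∈ S` with
`v ≤ f` satisfies `u z < v z`. This inequality persists near `z`; a finite cover of `X` and stability
of `S` under maxima produce the required function.
-/

open MeasureTheory Topology Filter
open scoped ENNReal

/-- The nonnegative part of an extended real number, as an element of `ℝ≥0∞`. -/
noncomputable def erealToENNReal (a : EReal) : ℝ≥0∞ :=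
  if a = ⊤ then ⊤ else ENNReal.ofReal a.toReal

/-- The (upper) integral of a function with values in `[-∞, ∞]`, defined as the
difference of the lower integrals of its positive and negative parts. -/
noncomputable def erealIntegral {α : Type*} [MeasurableSpace α]
    (μ : Measure α) (u : α → EReal) : EReal :=
  ((∫⁻ x, erealToENNReal (u x) ∂μ : ℝ≥0∞) : EReal) -
    ((∫⁻ x, erealToENNReal (-(u x)) ∂μ : ℝ≥0∞) : EReal)

/-- `μ` is a Jensen measure with barycenter `z` with respect to the family `S` of
(continuous real-valued) functions: a Borel probability measure such that
`u z ≤ ∫ u dμ` for every `u ∈ S`. -/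
def IsJensenMeasure {α : Type*} [MeasurableSpace α]
    (S : Set (α → ℝ)) (z : α) (μ : Measure α) : Prop :=
  IsProbabilityMeasure μ ∧ ∀ u ∈ S, u z ≤ ∫ x, u x ∂μ

/-- A function `u : α → [-∞, ∞)` is `S`-subharmonic if it is upper semicontinuous
and satisfies `u z ≤ ∫ u dμ` for every `z` and every Jensen measure `μ` with
barycenter `z` w.r.t. `S`. -/
def IsSSubharmonic {α : Type*} [TopologicalSpace α] [MeasurableSpace α]
    (S : Set (α → ℝ)) (u : α → EReal) : Prop :=
  UpperSemicontinuous u ∧ (∀ x, u x ≠ ⊤) ∧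
    ∀ z : α, ∀ μ : Measure α, IsJensenMeasure S z μ → u z ≤ erealIntegral μ u

/-- Hahn-Banach: a sublinear functional has a linear minorant that touches it at a given vector. -/
lemma exists_linear_le_sublinear_eq {E : Type*} [AddCommGroup E] [Module ℝ E] (p : E → ℝ)
    (p_hom : ∀ c : ℝ, 0 < c → ∀ x, p (c • x) = c * p x)
    (p_add : ∀ x y, p (x + y) ≤ p x + p y) (x₀ : E) :
    ∃ L : E →ₗ[ℝ] ℝ, L x₀ = p x₀ ∧ ∀ x, L x ≤ p x := by
  have p0 : p 0 = 0 := by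
    have := p_hom 2 (by norm_num) 0
    rw [smul_zero] at this
    linarith
  have H : ∀ c : ℝ, c • x₀ = 0 → (RingHom.id ℝ) c • p x₀ = 0 := by
    intro c hc
    rcases smul_eq_zero.1 hc with h | h
    · simp [h]
    · simp [h, p0]
  obtain ⟨L, hL, hLp⟩ := exists_extension_of_le_sublinear
    (LinearPMap.mkSpanSingleton' x₀ (p x₀) H) p p_hom p_add (by
      rintro ⟨x, hx⟩
      obtain ⟨c, rfl⟩ := Submodule.mem_span_singleton.1 hx
      rw [LinearPMap.mkSpanSingleton'_apply]
      simp only [RingHom.id_apply, smul_eq_mul]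
      rcases lt_trichotomy c 0 with h | h | h
      · -- For `c < 0`, use `0 = p 0 ≤ p (c • x₀) + p ((-c) • x₀)`.
        have h1 := p_add (c • x₀) ((-c) • x₀)
        rw [p_hom (-c) (by linarith), ← add_smul, add_neg_cancel, zero_smul, p0] at h1
        linarith
      · simp [h, p0]
      · rw [p_hom c h])
  refine ⟨L, ?_, hLp⟩
  exact (hL ⟨x₀, Submodule.mem_span_singleton_self x₀⟩).trans
    (LinearPMap.mkSpanSingleton'_apply_self x₀ (p x₀) H _)

/-- The Edwards envelope at `z`: the supremum of `v z` over the `v ∈ S` lying below `g`. It is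
`0` by convention when this set of reals is empty or unbounded, which does not occur when `S`
contains the constants and the space is compact. -/
noncomputable def edwardsSup {α : Type*} [TopologicalSpace α] (S : Set (α → ℝ)) (z : α)
    (g : C(α, ℝ)) : ℝ :=
  sSup {r | ∃ v ∈ S, (∀ x, v x ≤ g x) ∧ v z = r}

section Edwards

variable {α : Type*} [TopologicalSpace α] {S : Set (α → ℝ)}

lemma le_edwardsSup {z : α} {g : C(α, ℝ)} {v : α → ℝ} (hv : v ∈ S) (hvg : ∀ x, v x ≤ g x) :
    v z ≤ edwardsSup S z g :=
  le_csSup ⟨g z, by rintro _ ⟨w, -, hw, rfl⟩; exact hw z⟩ ⟨v, hv, hvg, rfl⟩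

variable [CompactSpace α]

lemma exists_const_le (g : C(α, ℝ)) : ∃ c : ℝ, ∀ x, c ≤ g x := by
  obtain ⟨c, hc⟩ := (isCompact_range g.continuous).bddBelow
  exact ⟨c, fun x => hc ⟨x, rfl⟩⟩

lemma exists_lt_of_lt_edwardsSup (hconst : ∀ c : ℝ, (fun _ => c) ∈ S) {z : α} {g : C(α, ℝ)} {r : ℝ}
    (hr : r < edwardsSup S z g) : ∃ v ∈ S, (∀ x, v x ≤ g x) ∧ r < v z := by
  obtain ⟨c, hc⟩ := exists_const_le g
  obtain ⟨_, ⟨v, hv, hvg, rfl⟩, h⟩ := exists_lt_of_lt_csSup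
    (s := {r | ∃ v ∈ S, (∀ x, v x ≤ g x) ∧ v z = r}) ⟨c, _, hconst c, hc, rfl⟩ hr
  exact ⟨v, hv, hvg, h⟩

lemma edwardsSup_add_le (hconst : ∀ c : ℝ, (fun _ => c) ∈ S)
    (hadd : ∀ u ∈ S, ∀ v ∈ S, u + v ∈ S) (z : α) (g h : C(α, ℝ)) :
    edwardsSup S z g + edwardsSup S z h ≤ edwardsSup S z (g + h) := by
  refine le_of_forall_pos_lt_add fun ε hε => ?_
  obtain ⟨v, hv, hvg, hvz⟩ := exists_lt_of_lt_edwardsSup (z := z) (g := g) hconst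
    (sub_lt_self _ (half_pos hε))
  obtain ⟨w, hw, hwh, hwz⟩ := exists_lt_of_lt_edwardsSup (z := z) (g := h) hconst
    (sub_lt_self _ (half_pos hε))
  have := le_edwardsSup (z := z) (g := g + h) (hadd v hv w hw)
    (fun x => add_le_add (hvg x) (hwh x))
  simp only [Pi.add_apply] at this
  linarith

lemma edwardsSup_smul (hconst : ∀ c : ℝ, (fun _ => c) ∈ S)
    (hsmul : ∀ u ∈ S, ∀ t : ℝ, 0 ≤ t → t • u ∈ S) (z : α) (c : ℝ) (hc : 0 < c) (g : C(α, ℝ)) :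
    edwardsSup S z (c • g) = c * edwardsSup S z g := by
  have key : ∀ c : ℝ, 0 < c → ∀ g : C(α, ℝ),
      c * edwardsSup S z g ≤ edwardsSup S z (c • g) := by
    intro c hc g
    refine le_of_forall_lt fun r hr => ?_
    obtain ⟨v, hv, hvg, hvz⟩ := exists_lt_of_lt_edwardsSup (z := z) (g := g) (r := r / c) hconst
      (by rwa [div_lt_iff₀' hc])
    have := le_edwardsSup (z := z) (g := c • g) (hsmul v hv c hc.le)
      (fun x => mul_le_mul_of_nonneg_left (hvg x) hc.le)
    rw [div_lt_iff₀' hc] at hvz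
    exact hvz.trans_le this
  refine le_antisymm ?_ (key c hc g)
  have := key c⁻¹ (inv_pos.2 hc) (c • g)
  rwa [inv_smul_smul₀ hc.ne', inv_mul_le_iff₀ hc] at this

variable [T2Space α] [MeasurableSpace α] [BorelSpace α]

/-- Edwards' duality: the envelope of `f` at `z` is the integral of `f` against some Jensen measure
with barycenter `z`. -/
lemma exists_jensen_integral_eq (hS : ∀ f ∈ S, Continuous f)
    (hconst : ∀ c : ℝ, (fun _ => c) ∈ S)
    (hadd : ∀ u ∈ S, ∀ v ∈ S, u + v ∈ S)
    (hsmul : ∀ u ∈ S, ∀ t : ℝ, 0 ≤ t → t • u ∈ S) (z : α) (f : C(α, ℝ)) :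
    ∃ μ : Measure α, IsJensenMeasure S z μ ∧ ∫ x, f x ∂μ = edwardsSup S z f := by
  obtain ⟨L, hLf, hL⟩ := exists_linear_le_sublinear_eq (fun g : C(α, ℝ) => -edwardsSup S z (-g))
    (fun c hc g => by
      change -edwardsSup S z (-(c • g)) = c * -edwardsSup S z (-g)
      rw [← smul_neg, edwardsSup_smul hconst hsmul z c hc, mul_neg])
    (fun g h => by
      have := edwardsSup_add_le hconst hadd z (-g) (-h)
      rw [← neg_add] at this
      change -edwardsSup S z (-(g + h)) ≤ -edwardsSup S z (-g) + -edwardsSup S z (-h)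
      linarith) (-f)
  have hLf' : L f = edwardsSup S z f := by simpa using hLf
  have hLE : ∀ g, edwardsSup S z g ≤ L g := fun g => by simpa using hL (-g)
  have hLv : ∀ g : C(α, ℝ), ∀ v ∈ S, (∀ x, v x ≤ g x) → v z ≤ L g := fun g v hv hvg =>
    (le_edwardsSup hv hvg).trans (hLE g)
  let Λ₀ : CompactlySupportedContinuousMap α ℝ →ₗ[ℝ] ℝ :=
    { toFun := fun g => L g.toContinuousMap
      map_add' := fun g h => L.map_add g.toContinuousMap h.toContinuousMap
      map_smul' := fun c g => L.map_smul c g.toContinuousMap }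
  let Λ : CompactlySupportedContinuousMap α ℝ →ₚ[ℝ] ℝ := PositiveLinearMap.mk₀ Λ₀
    (fun g hg => hLv g.toContinuousMap _ (hconst 0) (fun x => hg x))
  have hint : ∀ g : C(α, ℝ), ∫ x, g x ∂(RealRMK.rieszMeasure Λ) = L g := fun g =>
    RealRMK.integral_rieszMeasure Λ (CompactlySupportedContinuousMap.continuousMapEquiv g)
  have hL1 : L 1 = 1 := by
    refine le_antisymm ?_ (hLv 1 _ (hconst 1) (fun x => le_rfl))
    have := hLv (-1) _ (hconst (-1)) (fun x => le_rfl)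
    rw [map_neg] at this
    linarith
  refine ⟨RealRMK.rieszMeasure Λ, ⟨⟨?_⟩, fun v hv => ?_⟩, by rw [hint, hLf']⟩
  · have h1 := hint 1
    rw [hL1] at h1
    simp only [ContinuousMap.one_apply, integral_const, smul_eq_mul, mul_one] at h1
    exact (ENNReal.toReal_eq_one_iff _).1 h1
  · exact (hLv ⟨v, hS v hv⟩ v hv (fun x => le_rfl)).trans_eq (hint ⟨v, hS v hv⟩).symm

end Edwards

lemma erealToENNReal_mono : Monotone erealToENNReal := by
  intro a b hab
  unfold erealToENNReal
  by_cases hb : b = ⊤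
  · simp [hb]
  have ha : a ≠ ⊤ := fun h => hb (top_le_iff.1 (h ▸ hab))
  rw [if_neg ha, if_neg hb]
  by_cases ha' : a = ⊥
  · simp [ha']
  · exact ENNReal.ofReal_le_ofReal (EReal.toReal_le_toReal hab ha' hb)

lemma erealIntegral_mono {α : Type*} [MeasurableSpace α] (μ : Measure α) {u v : α → EReal}
    (h : ∀ x, u x ≤ v x) : erealIntegral μ u ≤ erealIntegral μ v :=
  EReal.sub_le_sub
    (EReal.coe_ennreal_le_coe_ennreal_iff.2 (lintegral_mono fun x => erealToENNReal_mono (h x)))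
    (EReal.coe_ennreal_le_coe_ennreal_iff.2 (lintegral_mono fun x =>
      erealToENNReal_mono (EReal.neg_le_neg_iff.2 (h x))))

lemma erealIntegral_coe {α : Type*} [MeasurableSpace α] {μ : Measure α} {g : α → ℝ}
    (hg : Integrable g μ) : erealIntegral μ (fun x => (g x : EReal)) = ((∫ x, g x ∂μ : ℝ) : EReal) := by
  have h1 : ∫⁻ x, ENNReal.ofReal (g x) ∂μ ≠ ⊤ := hg.lintegral_lt_top.ne
  have h2 : ∫⁻ x, ENNReal.ofReal (-g x) ∂μ ≠ ⊤ := hg.neg.lintegral_lt_top.ne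
  have e : ∀ r : ℝ, erealToENNReal (r : EReal) = ENNReal.ofReal r := fun r => by
    simp [erealToENNReal]
  rw [integral_eq_lintegral_pos_part_sub_lintegral_neg_part hg, EReal.coe_sub,
    EReal.coe_ennreal_toReal h1, EReal.coe_ennreal_toReal h2]
  simp only [erealIntegral, ← EReal.coe_neg, e]

/-- On a compact space, strict domination of an upper semicontinuous function by a continuous one is
uniform. -/
lemma exists_pos_forall_le_sub {α : Type*} [TopologicalSpace α] [CompactSpace α] {u : α → EReal}
    (hu : UpperSemicontinuous u) {f : α → ℝ} (hf : Continuous f)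
    (huf : ∀ x, u x < ((f x : ℝ) : EReal)) :
    ∃ ε : ℝ, 0 < ε ∧ ∀ x, u x ≤ ((f x - ε : ℝ) : EReal) := by
  have := isCompact_univ.induction_on (X := α)
    (p := fun s => ∃ ε : ℝ, 0 < ε ∧ ∀ x ∈ s, u x ≤ ((f x - ε : ℝ) : EReal))
    ⟨1, one_pos, by simp⟩
    (fun s t hst ⟨ε, hε, h⟩ => ⟨ε, hε, fun x hx => h x (hst hx)⟩)
    (fun s t ⟨ε, hε, h⟩ ⟨δ, hδ, h'⟩ => ⟨min ε δ, lt_min hε hδ, by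
      rintro x (hx | hx)
      · exact (h x hx).trans (EReal.coe_le_coe_iff.2 (sub_le_sub_left (min_le_left _ _) _))
      · exact (h' x hx).trans (EReal.coe_le_coe_iff.2 (sub_le_sub_left (min_le_right _ _) _))⟩)
    (fun z _ => by
      obtain ⟨c, hc1, hc2⟩ := EReal.lt_iff_exists_real_btwn.1 (huf z)
      rw [EReal.coe_lt_coe_iff] at hc2
      have hd : (c + f z) / 2 < f z := by linarith
      refine ⟨{x | u x < c ∧ (c + f z) / 2 < f x}, ?_, (f z - c) / 2, by linarith, ?_⟩
      · rw [nhdsWithin_univ]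
        exact (hu z c hc1).and (hf.continuousAt.eventually (lt_mem_nhds hd))
      · rintro x ⟨h1, h2⟩
        exact h1.le.trans (EReal.coe_le_coe_iff.2 (by linarith)))
  simpa using this

/-- If `u` is `S`-subharmonic on `X` and `f : X → ℝ` is continuous with `u < f`
everywhere, then there is `v ∈ S` with `u < v ≤ f` on `X`. -/
theorem exists_mem_between_of_lt_continuous {n : ℕ}
    (X : Set (Fin n → ℂ)) (hX : IsCompact X)
    (S : Set (↥X → ℝ)) (hS : ∀ f ∈ S, Continuous f)
    (hconst : ∀ c : ℝ, (fun _ => c) ∈ S)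
    (hadd : ∀ u ∈ S, ∀ v ∈ S, u + v ∈ S)
    (hsmul : ∀ u ∈ S, ∀ t : ℝ, 0 ≤ t → t • u ∈ S)
    (hmax : ∀ u ∈ S, ∀ v ∈ S, (fun x => max (u x) (v x)) ∈ S)
    (u : ↥X → EReal) (hu : IsSSubharmonic S u)
    (f : ↥X → ℝ) (hf : Continuous f) (huf : ∀ x, u x < ((f x : ℝ) : EReal)) :
    ∃ v ∈ S, ∀ x, u x < ((v x : ℝ) : EReal) ∧ v x ≤ f x := by
  have : CompactSpace X := isCompact_iff_compactSpace.1 hX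
  obtain ⟨ε, hε, huε⟩ := exists_pos_forall_le_sub hu.1 hf huf
  let F : C(X, ℝ) := ⟨f, hf⟩
  have hpt : ∀ z : X, ∃ v ∈ S, (∀ x, v x ≤ f x) ∧ u z < ((v z : ℝ) : EReal) := by
    intro z
    obtain ⟨μ, hμ, hμf⟩ := exists_jensen_integral_eq hS hconst hadd hsmul z F
    have := hμ.1
    have hfi : Integrable f μ :=
      hf.integrable_of_hasCompactSupport (HasCompactSupport.of_compactSpace f)
    have hle : u z ≤ ((edwardsSup S z F - ε : ℝ) : EReal) := by
      refine ((hu.2.2 z μ hμ).trans (erealIntegral_mono μ huε)).trans_eq ?_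
      rw [erealIntegral_coe (g := fun x => f x - ε) (hfi.sub (integrable_const ε)),
        integral_sub hfi (integrable_const ε), ← hμf]
      simp [F]
    obtain ⟨v, hv, hvf, hvz⟩ := exists_lt_of_lt_edwardsSup (z := z) (g := F) hconst
      (sub_lt_self _ hε)
    exact ⟨v, hv, hvf, hle.trans_lt (EReal.coe_lt_coe_iff.2 hvz)⟩
  obtain ⟨v, hv, hvf, hvu⟩ := isCompact_univ.induction_on (X := X)
    (p := fun s => ∃ v ∈ S, (∀ x, v x ≤ f x) ∧ ∀ x ∈ s, u x < ((v x : ℝ) : EReal))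
    (by
      obtain ⟨c, hc⟩ := exists_const_le F
      exact ⟨_, hconst c, hc, by simp⟩)
    (fun s t hst ⟨v, hv, hvf, h⟩ => ⟨v, hv, hvf, fun x hx => h x (hst hx)⟩)
    (fun s t ⟨v, hv, hvf, h⟩ ⟨w, hw, hwf, h'⟩ =>
      ⟨_, hmax v hv w hw, fun x => max_le (hvf x) (hwf x), by
        rintro x (hx | hx)
        · exact (h x hx).trans_le (EReal.coe_le_coe_iff.2 (le_max_left _ _))
        · exact (h' x hx).trans_le (EReal.coe_le_coe_iff.2 (le_max_right _ _))⟩)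
    (fun z _ => by
      obtain ⟨v, hv, hvf, hvz⟩ := hpt z
      obtain ⟨c, hc1, hc2⟩ := EReal.lt_iff_exists_real_btwn.1 hvz
      rw [EReal.coe_lt_coe_iff] at hc2
      refine ⟨{x | u x < c ∧ c < v x}, ?_, v, hv, hvf, ?_⟩
      · rw [nhdsWithin_univ]
        exact (hu.1 z c hc1).and ((hS v hv).continuousAt.eventually (lt_mem_nhds hc2))
      · rintro x ⟨h1, h2⟩
        exact h1.trans (EReal.coe_lt_coe_iff.2 h2))
  exact ⟨v, hv, fun x => ⟨hvu x (Set.mem_univ x), hvf x⟩⟩
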